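/- arXiv:2301.04079 — 2 statements merged into one kernel-verified Lean document; each statement's English description precedes it below -/
import Mathlib

section
/- Let C be an abelian category satisfying the minimal cover axiom, and let X be a non-negative chain complex in C such that X_n is projective for every n ≥ 0 and H_n(X) has projective dimension at most 1 for every n ≥ 0. Then X is indecomposable if, and only if, one of the following holds: (i) H_n(X) = 0 for all n, in which case X is isomorphic to D^n(Y) for some n and some indecomposable projective object Y of C; or (ii) H_n(X) ≠ 0 for exactly one degree n, in which case H_n(X) is indecomposable and X is isomorphic to S^n(P) where P is a minimal projective resolution of H_n(X). -/
open CategoryTheory CategoryTheory.Limits ZeroObject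

universe v u

variable {C : Type u} [Category.{v} C] [Abelian C]

/-- `p : P ⟶ X` is a minimal projective cover. -/
def IsMinimalProjectiveCover {E : Type*} [Category E] {P X : E} (p : P ⟶ X) : Prop :=
  Projective P ∧ Epi p ∧ ∀ φ : P ⟶ P, φ ≫ p = p → IsIso φ

/-- A category satisfies the minimal cover axiom if every object admits a minimal
projective cover. -/
def HasMinimalCovers (E : Type*) [Category E] : Prop :=
  ∀ X : E, ∃ (P : E) (p : P ⟶ X), IsMinimalProjectiveCover p

/-- Degrees of the disk `D^n(A)`: `A` in degrees `n` and `n - 1`, and `0` elsewhere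
(for `n = 0`, `A` concentrated in degree `0`). -/
noncomputable def diskObj (n : ℕ) (A : C) : ℕ → C := fun i =>
  if i = n ∨ i + 1 = n then A else 0

/-- Differentials of the disk `D^n(A)`: the identity of `A` in degree `n`. -/
noncomputable def diskD (n : ℕ) (A : C) :
    ∀ k : ℕ, diskObj n A (k + 1) ⟶ diskObj n A k := fun k =>
  if h : k + 1 = n then
    eqToHom (if_pos (Or.inl h)) ≫ eqToHom (if_pos (Or.inr h)).symm
  else 0

/-- The disk `D^n(A)`: the chain complex equal to `A` in degrees `n` and `n − 1` with
`n`-th boundary the identity, and `0` elsewhere; `D^0(A)` is `A` concentrated in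
degree `0`. -/
noncomputable def disk (n : ℕ) (A : C) : ChainComplex C ℕ :=
  ChainComplex.of (diskObj n A) (diskD n A) (by
    intro k
    have h2 : ¬(k + 1 + 1 = n) ∨ ¬(k + 1 = n) := by omega
    rcases h2 with h2 | h2 <;> simp [diskD, h2])

/-- Degrees of the suspension of a chain complex. -/
noncomputable def suspObj (X : ChainComplex C ℕ) : ℕ → C
  | 0 => 0
  | n + 1 => X.X n

/-- Differentials of the suspension of a chain complex. -/
noncomputable def suspD (X : ChainComplex C ℕ) :
    ∀ k : ℕ, suspObj X (k + 1) ⟶ suspObj X k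
  | 0 => 0
  | k + 1 => X.d (k + 1) k

/-- The suspension `S(X)` of a non-negative chain complex `X`. -/
noncomputable def susp (X : ChainComplex C ℕ) : ChainComplex C ℕ :=
  ChainComplex.of (suspObj X) (suspD X) (by
    intro k
    match k with
    | 0 => exact comp_zero
    | k + 1 => exact X.d_comp_d _ _ _)

/-- The `n`-fold suspension `Sⁿ(X)` of a non-negative chain complex `X`. -/
noncomputable def suspN : ℕ → ChainComplex C ℕ → ChainComplex C ℕ
  | 0, X => X
  | n + 1, X => susp (suspN n X)

/-- Degrees of the chain complex with `P0` in degree `0` and `P1` in degree `1`. -/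
noncomputable def twoObj (P0 P1 : C) : ℕ → C
  | 0 => P0
  | 1 => P1
  | _ + 2 => 0

/-- Differentials of the chain complex with `P1 ⟶ P0` concentrated in degrees `1`, `0`. -/
noncomputable def twoD {P0 P1 : C} (d : P1 ⟶ P0) :
    ∀ k : ℕ, twoObj P0 P1 (k + 1) ⟶ twoObj P0 P1 k
  | 0 => d
  | _ + 1 => 0

/-- The chain complex concentrated in degrees `0` and `1`, given by a morphism
`d : P1 ⟶ P0`. -/
noncomputable def twoComplex {P0 P1 : C} (d : P1 ⟶ P0) : ChainComplex C ℕ :=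
  ChainComplex.of (twoObj P0 P1) (twoD d) (by
    intro k
    exact zero_comp)

/-- `IsMinimalLen1Resolution d p` expresses that `0 ⟶ P1 ⟶ P0 ⟶ A ⟶ 0` is a minimal
projective resolution of `A` of length at most 1: `d` is a monomorphism,
`p : P0 ⟶ A` is a minimal projective cover, and the induced morphism
`P1 ⟶ ker p` is a minimal projective cover. -/
def IsMinimalLen1Resolution {P1 P0 A : C} (d : P1 ⟶ P0) (p : P0 ⟶ A) : Prop :=
  Mono d ∧ ∃ w : d ≫ p = 0,
    IsMinimalProjectiveCover p ∧ IsMinimalProjectiveCover (kernel.lift p d w)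

/-- An object has projective dimension at most 1: it admits a projective resolution
`0 ⟶ P1 ⟶ P0 ⟶ A ⟶ 0` of length at most 1. -/
def ProjDimLE1 (A : C) : Prop :=
  ∃ (P1 P0 : C) (d : P1 ⟶ P0) (p : P0 ⟶ A) (w : d ≫ p = 0),
    Projective P1 ∧ Projective P0 ∧ Mono d ∧ Epi p ∧ (ShortComplex.mk d p w).Exact

/-!
Write `Zₙ` and `Bₙ` for the cycles and boundaries of `X`. If `Zₙ` is projective, then so is
`Bₙ = ker (Zₙ ⟶ Hₙ(X))`, because `Hₙ(X)` has projective dimension at most 1, and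
`0 ⟶ Zₙ₊₁ ⟶ Xₙ₊₁ ⟶ Bₙ ⟶ 0` splits; by induction all cycles split off. Hence the complex `Bₙ ⟶ Zₙ` in
degrees `n + 1` and `n` is a retract of `X`, and it is all of `X` when `X` is indecomposable and
`Zₙ ≠ 0`.

By minimality, comparison maps make the minimal resolution of a retract `A` of `Hₙ(X)` a retract of
`Bₙ ⟶ Zₙ`, so it is all of `X` when `A ≠ 0`. Taking `A = Hₙ(X)` identifies `X`; letting `A` vary
shows that `Hₙ(X)` is indecomposable.

Conversely, let `K` be a retract of `Sⁿ(P)` with `Hₙ(K) = 0`. Then `Kₙ₊₁ ⟶ Kₙ` is an epimorphism, so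
the composite `Kₙ ⟶ P₀ ⟶ Hₙ` vanishes, and minimality forces `Kₙ = 0`.
-/

section Retracts

variable {E : Type*} [Category* E]

section HasZeroMorphisms

variable [HasZeroMorphisms E] [HasBinaryBiproducts E]

theorem indecomposable_of_iso {X Y : E} (e : X ≅ Y) (hX : Indecomposable X) :
    Indecomposable Y :=
  ⟨fun hY => hX.1 (hY.of_iso e), fun Z W f => hX.2 Z W (e ≪≫ f)⟩

theorem indecomposable_of_forall_retract_mono {X : E} (hX : ¬ IsZero X)
    (h : ∀ ⦃A : E⦄ (ρ : Retract A X), ¬ IsZero A → Mono ρ.r) : Indecomposable X := by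
  refine ⟨hX, fun Y Z e => or_iff_not_imp_left.2 fun hY => ?_⟩
  have : Mono (e.hom ≫ biprod.fst) := h ⟨biprod.inl ≫ e.inv, e.hom ≫ biprod.fst, by simp⟩ hY
  have hinr : biprod.inr ≫ e.inv = 0 := by simp [← cancel_mono (e.hom ≫ biprod.fst)]
  exact .of_mono_eq_zero _ hinr

theorem indecomposable_of_map {D : Type*} [Category* D] [HasZeroMorphisms D]
    [HasBinaryBiproducts D] (F : D ⥤ E) [F.PreservesZeroMorphisms] [PreservesFiniteBiproducts F]
    {X : D} (hX : Indecomposable (F.obj X))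
    (hF : ∀ ⦃A : D⦄, Retract A X → IsZero (F.obj A) → IsZero A) : Indecomposable X := by
  have := preservesBinaryBiproducts_of_preservesBiproducts F
  refine ⟨fun h => hX.1 (F.map_isZero h), fun Y Z e => ?_⟩
  refine (hX.2 _ _ (F.mapIso e ≪≫ F.mapBiprod Y Z)).imp (hF ?_) (hF ?_)
  · exact ⟨biprod.inl ≫ e.inv, e.hom ≫ biprod.fst, by simp⟩
  · exact ⟨biprod.inr ≫ e.inv, e.hom ≫ biprod.snd, by simp⟩

end HasZeroMorphisms

theorem isIso_retract_r_of_indecomposable [Preadditive E] [HasBinaryBiproducts E]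
    [IsIdempotentComplete E] {A X : E} (hX : Indecomposable X) (ρ : Retract A X)
    (hA : ¬ IsZero A) : IsIso ρ.r := by
  obtain ⟨B, j, q, hjq, hqj⟩ := IsIdempotentComplete.idempotents_split X (𝟙 X - ρ.r ≫ ρ.i) (by simp)
  have hq : ρ.i ≫ q = 0 := by
    have : ρ.i ≫ (q ≫ j) ≫ q = 0 := by simp [hqj]
    simpa [hjq] using this
  let s : (ShortComplex.mk ρ.i q hq).Splitting :=
    { r := ρ.r
      s := j
      f_r := ρ.retract
      s_g := hjq
      id := by simp [hqj] }
  have hB : IsZero B := (hX.2 A B s.isoBinaryBiproduct).resolve_left hA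
  refine ⟨ρ.i, ?_, ρ.retract⟩
  rw [← sub_eq_zero, ← neg_sub, ← hqj, hB.eq_of_tgt q 0, zero_comp, neg_zero]

end Retracts

section MinimalCovers

theorem IsMinimalProjectiveCover.exists_retractArrow {E : Type*} [Category* E] {P A Q H : E}
    {p : P ⟶ A} (hp : IsMinimalProjectiveCover p) (q : Q ⟶ H) [Projective Q] [Epi q]
    (ρ : Retract A H) : ∃ τ : RetractArrow p q, τ.right = ρ := by
  obtain ⟨_, _, hmin⟩ := hp
  let a : P ⟶ Q := Projective.factorThru (p ≫ ρ.i) q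
  let b : Q ⟶ P := Projective.factorThru (q ≫ ρ.r) p
  have hab : (a ≫ b) ≫ p = p := by simp [a, b]
  have := hmin _ hab
  exact ⟨{ i := Arrow.homMk a ρ.i (by simp [a])
           r := Arrow.homMk (b ≫ inv (a ≫ b)) ρ.r (by
            simp [(IsIso.inv_comp_eq (a ≫ b)).2 hab.symm, b])
           retract := by ext <;> simp [← Category.assoc] }, rfl⟩

theorem IsMinimalProjectiveCover.isZero_of_retract {E : Type*} [Category* E] [Preadditive E]
    {P A Q : E} {p : P ⟶ A} (hp : IsMinimalProjectiveCover p) (ρ : Retract Q P)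
    (h : ρ.i ≫ p = 0) : IsZero Q := by
  have := hp.2.2 (𝟙 P - ρ.r ≫ ρ.i) (by simp [h])
  refine .of_mono_eq_zero ρ.i ?_
  simp [← cancel_mono (𝟙 P - ρ.r ≫ ρ.i)]

theorem IsMinimalProjectiveCover.isMinimalLen1Resolution_kernel_ι {P A : C} {p : P ⟶ A}
    (hp : IsMinimalProjectiveCover p) (hK : Projective (kernel p)) :
    IsMinimalLen1Resolution (kernel.ι p) p := by
  have hid : kernel.lift p (kernel.ι p) (kernel.condition p) = 𝟙 _ := by simp
  refine ⟨inferInstance, kernel.condition p, hp, ?_⟩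
  rw [hid]
  refine ⟨hK, inferInstance, fun φ hφ => ?_⟩
  rw [Category.comp_id] at hφ
  exact hφ ▸ inferInstance

theorem ProjDimLE1.projective_kernel {A Q : C} (hA : ProjDimLE1 A) (q : Q ⟶ A) [Epi q]
    [Projective Q] : Projective (kernel q) := by
  obtain ⟨P₁, P₀, d, p, w, hP₁, hP₀, hd, hp, hex⟩ := hA
  have hS : (ShortComplex.mk d p w).ShortExact := { exact := hex }
  have hT : (ShortComplex.mk (kernel.ι q) q (kernel.condition q)).ShortExact :=
    { exact := ShortComplex.exact_kernel q }
  rw [projective_iff_hasProjectiveDimensionLT_one]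
  exact (hT.hasProjectiveDimensionLT_X₃_iff 0 ‹_›).1 <|
    (hS.hasProjectiveDimensionLT_X₃_iff 0 hP₀).2 <| inferInstanceAs (HasProjectiveDimensionLT P₁ 1)

/-- The retract of kernels induced by a retract of morphisms. -/
noncomputable def retractArrowKernel {E : Type*} [Category* E] [HasZeroMorphisms E] {X Y Z W : E}
    {f : X ⟶ Y} {g : Z ⟶ W} [HasKernel f] [HasKernel g] (τ : RetractArrow f g) :
    RetractArrow (kernel.ι f) (kernel.ι g) where
  i := Arrow.homMk (kernel.map f g τ.i.left τ.i.right τ.i_w.symm) τ.i.left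
  r := Arrow.homMk (kernel.map g f τ.r.left τ.r.right τ.r_w.symm) τ.r.left
  retract := by
    ext
    · simp [← cancel_mono (kernel.ι f)]
    · simp

end MinimalCovers

section Doubles

open HomologicalComplex

variable {E : Type*} [Category* E] [HasZeroMorphisms E]

theorem isZero_of_forall_isZero_X {ι : Type*} {c : ComplexShape ι} {K : HomologicalComplex E c}
    (hK : ∀ j, IsZero (K.X j)) : IsZero K :=
  (IsZero.iff_id_eq_zero K).2 (by ext j; exact (hK j).eq_of_src _ _)

variable [HasZeroObject E]

section

variable {ι : Type*} {c : ComplexShape ι} {i₀ i₁ : ι} (hi : c.Rel i₀ i₁) (h : i₀ ≠ i₁)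

section

variable {X₀ X₁ : E} {f : X₀ ⟶ X₁} {K : HomologicalComplex E c} (φ₀ : K.X i₀ ⟶ X₀)
  (φ₁ : K.X i₁ ⟶ X₁) (comm : K.d i₀ i₁ ≫ φ₁ = φ₀ ≫ f)
  (hφ : ∀ k, c.Rel k i₀ → K.d k i₀ ≫ φ₀ = 0)

open scoped Classical in
/-- Constructor for morphisms to a complex concentrated in two degrees, dual to
`HomologicalComplex.mkHomFromDouble`. -/
noncomputable def mkHomToDouble : K ⟶ double f hi where
  f k :=
    if hk₀ : k = i₀ then
      eqToHom (by rw [hk₀]) ≫ φ₀ ≫ (doubleXIso₀ f hi).inv ≫ eqToHom (by rw [hk₀])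
    else if hk₁ : k = i₁ then
      eqToHom (by rw [hk₁]) ≫ φ₁ ≫ (doubleXIso₁ f hi h).inv ≫ eqToHom (by rw [hk₁])
    else 0
  comm' k l hkl := by
    by_cases hl₁ : l = i₁
    · subst hl₁
      obtain rfl := c.prev_eq hkl hi
      simp [dif_neg h.symm, double_d f hi h, reassoc_of% comm]
    · by_cases hl₀ : l = i₀
      · subst hl₀
        simp [double_d_eq_zero₁ _ _ _ _ h, reassoc_of% hφ k hkl]
      · exact (isZero_double_X f hi l hl₀ hl₁).eq_of_tgt _ _

@[simp]
theorem mkHomToDouble_f₀ :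
    (mkHomToDouble hi h φ₀ φ₁ comm hφ).f i₀ = φ₀ ≫ (doubleXIso₀ f hi).inv := by
  simp [mkHomToDouble]

@[simp]
theorem mkHomToDouble_f₁ :
    (mkHomToDouble hi h φ₀ φ₁ comm hφ).f i₁ = φ₁ ≫ (doubleXIso₁ f hi h).inv := by
  simp [mkHomToDouble, dif_neg h.symm]

end

/-- Constructor for retractions of a complex onto a complex concentrated in two degrees. -/
noncomputable def retractDouble {X₀ X₁ : E} {f : X₀ ⟶ X₁} {K : HomologicalComplex E c}
    (ρ₀ : Retract X₀ (K.X i₀)) (ρ₁ : Retract X₁ (K.X i₁))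
    (comm_i : ρ₀.i ≫ K.d i₀ i₁ = f ≫ ρ₁.i) (comm_r : K.d i₀ i₁ ≫ ρ₁.r = ρ₀.r ≫ f)
    (hi₁ : ∀ k, c.Rel i₁ k → ρ₁.i ≫ K.d i₁ k = 0)
    (hr₀ : ∀ k, c.Rel k i₀ → K.d k i₀ ≫ ρ₀.r = 0) : Retract (double f hi) K where
  i := mkHomFromDouble hi h ρ₀.i ρ₁.i comm_i hi₁
  r := mkHomToDouble hi h ρ₀.r ρ₁.r comm_r hr₀
  retract := by ext <;> simp

/-- The functor sending a morphism `f` to the complex `f` concentrated in degrees `i₀`, `i₁`. -/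
noncomputable def doubleFunctor : Arrow E ⥤ HomologicalComplex E c where
  obj f := double f.hom hi
  map {f g} τ := mkHomFromDouble hi h (τ.left ≫ (doubleXIso₀ g.hom hi).inv)
    (τ.right ≫ (doubleXIso₁ g.hom hi h).inv) (by simp [double_d _ hi h])
    (fun k _ => by rw [double_d_eq_zero₀ _ _ _ _ h.symm, comp_zero])
  map_id f := by ext <;> simp
  map_comp τ τ' := by ext <;> simp

theorem doubleFunctor_map_f₁ {f g : Arrow E} (τ : f ⟶ g) :
    ((doubleFunctor hi h).map τ).f i₁ =
      (doubleXIso₁ f.hom hi h).hom ≫ τ.right ≫ (doubleXIso₁ g.hom hi h).inv := by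
  simp [doubleFunctor]

theorem isIso_right_of_isIso_doubleFunctor_map {f g : Arrow E} (τ : f ⟶ g)
    [IsIso ((doubleFunctor hi h).map τ)] : IsIso τ.right := by
  have : IsIso ((doubleXIso₁ f.hom hi h).hom ≫ τ.right ≫ (doubleXIso₁ g.hom hi h).inv) :=
    doubleFunctor_map_f₁ hi h τ ▸ inferInstanceAs (IsIso (((doubleFunctor hi h).map τ).f i₁))
  simpa using this

theorem isZero_right_of_isZero_doubleFunctor_obj {f : Arrow E}
    (hf : IsZero ((doubleFunctor hi h).obj f)) : IsZero f.right :=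
  ((eval E c i₁).map_isZero hf).of_iso (doubleXIso₁ f.hom hi h).symm

theorem isZero_doubleFunctor_obj_X (f : Arrow E) {k : ι} (h₀ : k ≠ i₀) (h₁ : k ≠ i₁) :
    IsZero (((doubleFunctor hi h).obj f).X k) :=
  isZero_double_X f.hom hi k h₀ h₁

/-- A complex vanishing outside the degrees `i₀` and `i₁` is determined by its differential. -/
noncomputable def isoDouble {K : HomologicalComplex E c} (hi' : ¬ c.Rel i₁ i₀)
    (hK : ∀ j, j ≠ i₀ → j ≠ i₁ → IsZero (K.X j)) : K ≅ double (K.d i₀ i₁) hi where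
  hom := mkHomToDouble hi h (𝟙 _) (𝟙 _) (by simp) (fun k hk => by
    have h₁ : k ≠ i₁ := fun h₁ => hi' (h₁ ▸ hk)
    have h₀ : k ≠ i₀ := fun h₀ => h (c.next_eq (h₀ ▸ hk) hi)
    exact (hK k h₀ h₁).eq_of_src _ _)
  inv := mkHomFromDouble hi h (𝟙 _) (𝟙 _) (by simp) (fun k hk => by
    have h₀ : k ≠ i₀ := fun h₀ => hi' (h₀ ▸ hk)
    have h₁ : k ≠ i₁ := fun h₁ => h (c.prev_eq hi (h₁ ▸ hk))
    exact (hK k h₀ h₁).eq_of_tgt _ _)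
  hom_inv_id := by
    ext k
    by_cases h₀ : k = i₀
    · subst h₀; simp
    · by_cases h₁ : k = i₁
      · subst h₁; simp
      · exact (hK k h₀ h₁).eq_of_src _ _
  inv_hom_id := by ext <;> simp

end

/-- The functor sending a morphism `f` to the chain complex `f` concentrated in degrees `n + 1`
and `n`. -/
noncomputable abbrev doubleChainFunctor (n : ℕ) : Arrow E ⥤ ChainComplex E ℕ :=
  doubleFunctor (i₀ := n + 1) (i₁ := n) rfl n.succ_ne_self

/-- A chain complex concentrated in degrees `n + 1` and `n` is determined by its differential. -/
noncomputable def isoDoubleChain {K : ChainComplex E ℕ} {n : ℕ}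
    (hK : ∀ j, j ≠ n → j ≠ n + 1 → IsZero (K.X j)) :
    K ≅ (doubleChainFunctor n).obj (Arrow.mk (K.d (n + 1) n)) :=
  isoDouble rfl n.succ_ne_self (by rw [ComplexShape.down_Rel]; lia) (fun j h₁ h₀ => hK j h₀ h₁)

end Doubles

section DisksAndSuspensions

theorem isZero_disk_X {n : ℕ} (Y : C) {j : ℕ} (h : j ≠ n) (h' : j + 1 ≠ n) :
    IsZero ((disk n Y).X j) := by
  rw [show (disk n Y).X j = 0 from if_neg (by tauto)]
  exact isZero_zero C

/-- The term of degree `n` of the disk `Dⁿ(Y)`. -/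
noncomputable def diskXIso (n : ℕ) (Y : C) : (disk n Y).X n ≅ Y :=
  eqToIso (if_pos (Or.inl rfl))

instance isIso_disk_d (n : ℕ) (Y : C) : IsIso ((disk (n + 1) Y).d (n + 1) n) := by
  have hd : (disk (n + 1) Y).d (n + 1) n = diskD (n + 1) Y n := ChainComplex.of_d _ _ _
  have : IsIso (diskD (n + 1) Y n) := by
    rw [diskD, dif_pos rfl]
    exact (eqToIso (if_pos (Or.inl rfl)) ≪≫ eqToIso (if_pos (Or.inr rfl)).symm).isIso_hom
  exact hd ▸ this

/-- The disk `Dⁿ⁺¹(Y)` as the identity of `Y` in degrees `n + 1` and `n`. -/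
noncomputable def diskIso (n : ℕ) (Y : C) :
    disk (n + 1) Y ≅ (doubleChainFunctor n).obj (Arrow.mk (𝟙 Y)) :=
  isoDoubleChain (fun _ h₀ h₁ => isZero_disk_X Y h₁ (by lia)) ≪≫
    (doubleChainFunctor n).mapIso (X := Arrow.mk ((disk (n + 1) Y).d (n + 1) n))
      (Y := Arrow.mk (𝟙 Y)) (Arrow.isoMk (diskXIso (n + 1) Y)
      ((asIso ((disk (n + 1) Y).d (n + 1) n)).symm ≪≫ diskXIso (n + 1) Y))

theorem isZero_suspN_twoComplex_X {P₁ P₀ : C} (d : P₁ ⟶ P₀) (n : ℕ) :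
    ∀ j, j ≠ n → j ≠ n + 1 → IsZero ((suspN n (twoComplex d)).X j) := by
  induction n with
  | zero =>
    rintro (_ | _ | j) h₀ h₁
    · exact absurd rfl h₀
    · exact absurd rfl h₁
    · exact isZero_zero C
  | succ n ih =>
    rintro (_ | j) h₀ h₁
    · exact isZero_zero C
    · exact ih j (by lia) (by lia)

/-- The only nonzero differential of the `n`-fold suspension of `d : P₁ ⟶ P₀` is `d`. -/
noncomputable def suspNTwoComplexArrowIso {P₁ P₀ : C} (d : P₁ ⟶ P₀) : ∀ n : ℕ,
    Arrow.mk ((suspN n (twoComplex d)).d (n + 1) n) ≅ Arrow.mk d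
  | 0 => eqToIso (congrArg Arrow.mk (ChainComplex.of_d (twoObj P₀ P₁) (twoD d) 0))
  | n + 1 =>
    eqToIso (congrArg Arrow.mk (ChainComplex.of_d (suspObj (suspN n (twoComplex d))) _ (n + 1))) ≪≫
      suspNTwoComplexArrowIso d n

/-- The `n`-fold suspension of `d : P₁ ⟶ P₀` as `d` in degrees `n + 1` and `n`. -/
noncomputable def suspNTwoComplexIso {P₁ P₀ : C} (d : P₁ ⟶ P₀) (n : ℕ) :
    suspN n (twoComplex d) ≅ (doubleChainFunctor n).obj (Arrow.mk d) :=
  isoDoubleChain (isZero_suspN_twoComplex_X d n) ≪≫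
    (doubleChainFunctor n).mapIso (suspNTwoComplexArrowIso d n)

end DisksAndSuspensions

section Cycles

variable (X : ChainComplex C ℕ)

/-- The morphism `Xₙ₊₁ ⟶ Bₙ` induced by the differential, where the boundaries `Bₙ` are encoded as
the kernel of `Zₙ ⟶ Hₙ(X)`. -/
noncomputable def toBoundaries (n : ℕ) : X.X (n + 1) ⟶ kernel (X.homologyπ n) :=
  kernel.lift _ (X.toCycles (n + 1) n) (by simp)

@[simp]
theorem toBoundaries_ι (n : ℕ) :
    toBoundaries X n ≫ kernel.ι (X.homologyπ n) = X.toCycles (n + 1) n :=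
  kernel.lift_ι _ _ _

instance epi_toBoundaries (n : ℕ) : Epi (toBoundaries X n) :=
  (ShortComplex.exact_iff_epi_kernel_lift _).1 <|
    ShortComplex.exact_of_g_is_cokernel (.mk (X.toCycles (n + 1) n) (X.homologyπ n) (by simp))
      (X.homologyIsCokernel (n + 1) n (by simp))

theorem iCycles_toBoundaries (n : ℕ) : X.iCycles (n + 1) ≫ toBoundaries X n = 0 := by
  rw [← cancel_mono (kernel.ι _), ← cancel_mono (X.iCycles n)]
  simp

theorem shortExact_iCycles_toBoundaries (n : ℕ) :
    (ShortComplex.mk _ _ (iCycles_toBoundaries X n)).ShortExact where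
  exact := ShortComplex.exact_of_f_is_kernel _ <|
    isKernelOfComp (kernel.ι (X.homologyπ n) ≫ X.iCycles n) _ (X.cyclesIsKernel (n + 1) n (by simp))
      (iCycles_toBoundaries X n) (by rw [reassoc_of% toBoundaries_ι X n, X.toCycles_i])

theorem projective_cycles_of_isSplitMono (n : ℕ) [Projective (X.X n)] [IsSplitMono (X.iCycles n)] :
    Projective (X.cycles n) :=
  Retract.projective ⟨X.iCycles n, retraction _, IsSplitMono.id _⟩

theorem isSplitMono_iCycles (hcof : ∀ n, Projective (X.X n))
    (hpd : ∀ n, ProjDimLE1 (X.homology n)) (n : ℕ) : IsSplitMono (X.iCycles n) := by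
  induction n with
  | zero =>
    have : IsIso (X.iCycles 0) := X.isIso_iCycles 0 0 (by simp) (by simp)
    infer_instance
  | succ n ih =>
    have := hcof n
    have := projective_cycles_of_isSplitMono X n
    have : Projective (kernel (X.homologyπ n)) := (hpd n).projective_kernel _
    exact ((shortExact_iCycles_toBoundaries X n).splittingOfProjective).isSplitMono_f

theorem projective_cycles (hcof : ∀ n, Projective (X.X n))
    (hpd : ∀ n, ProjDimLE1 (X.homology n)) (n : ℕ) : Projective (X.cycles n) :=
  have := hcof n
  have := isSplitMono_iCycles X hcof hpd n
  projective_cycles_of_isSplitMono X n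

/-- The boundaries `Bₙ`, when projective, as a retract of `Xₙ₊₁`. -/
@[simps]
noncomputable def retractBoundaries (n : ℕ) [Projective (kernel (X.homologyπ n))] :
    Retract (kernel (X.homologyπ n)) (X.X (n + 1)) where
  i := Projective.factorThru (𝟙 _) (toBoundaries X n)
  r := toBoundaries X n

/-- The complex `Bₙ ⟶ Zₙ` in degrees `n + 1` and `n`, for split cycles and projective boundaries, as
a retract of `X`. -/
noncomputable def retractDoubleBoundaries (n : ℕ) [IsSplitMono (X.iCycles n)]
    [Projective (kernel (X.homologyπ n))] :
    Retract ((doubleChainFunctor n).obj (Arrow.mk (kernel.ι (X.homologyπ n)))) X :=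
  retractDouble (f := kernel.ι (X.homologyπ n)) rfl n.succ_ne_self (retractBoundaries X n)
    ⟨X.iCycles n, retraction (X.iCycles n), by simp⟩
    (by
      dsimp only
      rw [← X.toCycles_i, ← reassoc_of% toBoundaries_ι X n, ← retractBoundaries_r,
        Retract.retract_assoc])
    (by
      dsimp only
      rw [← X.toCycles_i, Category.assoc, IsSplitMono.id, Category.comp_id, retractBoundaries_r,
        toBoundaries_ι])
    (by simp)
    (fun k _ => by simp [← cancel_mono (kernel.ι (X.homologyπ n))])

end Cycles

section Presentations

variable {ι : Type*} {c : ComplexShape ι} {i₀ i₁ : ι} {hi : c.Rel i₀ i₁} {h : i₀ ≠ i₁}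
  {Q H : C} {q : Q ⟶ H}

theorem isIso_doubleFunctor_map_retract_r {f g : Arrow C}
    (hg : Indecomposable ((doubleFunctor hi h).obj g)) (τ : Retract f g)
    (hf : ¬ IsZero f.right) : IsIso ((doubleFunctor hi h).map τ.r) :=
  isIso_retract_r_of_indecomposable hg (τ.map (doubleFunctor hi h)) fun hf' =>
    hf (isZero_right_of_isZero_doubleFunctor_obj hi h hf')

theorem indecomposable_of_doubleFunctor_id {Y : C}
    (hY : Indecomposable ((doubleFunctor hi h).obj (Arrow.mk (𝟙 Y)))) : Indecomposable Y := by
  refine indecomposable_of_forall_retract_mono (fun hY₀ => hY.1 ?_) fun A ρ hA => ?_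
  · refine (IsZero.iff_id_eq_zero _).2 (HomologicalComplex.from_double_hom_ext (hi₀₁ := hi) ?_ ?_)
    · exact (hY₀.of_iso (HomologicalComplex.doubleXIso₀ _ _)).eq_of_src _ _
    · exact (hY₀.of_iso (HomologicalComplex.doubleXIso₁ _ _ h)).eq_of_src _ _
  · let τ : RetractArrow (𝟙 A) (𝟙 Y) := (𝟙 (𝟭 C) : 𝟭 C ⟶ 𝟭 C).retractArrowApp ρ
    have := isIso_doubleFunctor_map_retract_r hY τ hA
    have : IsIso ρ.r := isIso_right_of_isIso_doubleFunctor_map hi h τ.r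
    infer_instance

theorem IsMinimalProjectiveCover.exists_retractArrow_isIso {P A : C} {p : P ⟶ A}
    (hp : IsMinimalProjectiveCover p) [Projective Q] [Epi q]
    (hq : Indecomposable ((doubleFunctor hi h).obj (Arrow.mk (kernel.ι q))))
    (ρ : Retract A H) (hA : ¬ IsZero A) :
    ∃ τ : RetractArrow p q, τ.right = ρ ∧
      IsIso ((doubleFunctor hi h).map (retractArrowKernel τ).r) := by
  obtain ⟨τ, hτ⟩ := hp.exists_retractArrow q ρ
  have := hp.2.1
  exact ⟨τ, hτ, isIso_doubleFunctor_map_retract_r hq (retractArrowKernel τ) fun hP =>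
    hA (.of_epi p hP)⟩

theorem IsMinimalProjectiveCover.nonempty_doubleFunctor_kernel_iso {P : C} {p : P ⟶ H}
    (hp : IsMinimalProjectiveCover p) [Projective Q] [Epi q]
    (hq : Indecomposable ((doubleFunctor hi h).obj (Arrow.mk (kernel.ι q)))) (hH : ¬ IsZero H) :
    Nonempty ((doubleFunctor hi h).obj (Arrow.mk (kernel.ι q)) ≅
      (doubleFunctor hi h).obj (Arrow.mk (kernel.ι p))) := by
  obtain ⟨τ, -, _⟩ := hp.exists_retractArrow_isIso hq (Retract.refl H) hH
  exact ⟨asIso ((doubleFunctor hi h).map (retractArrowKernel τ).r)⟩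

theorem HasMinimalCovers.indecomposable_of_doubleFunctor_kernel (hC : HasMinimalCovers C)
    [Projective Q] [Epi q]
    (hq : Indecomposable ((doubleFunctor hi h).obj (Arrow.mk (kernel.ι q)))) (hH : ¬ IsZero H) :
    Indecomposable H := by
  refine indecomposable_of_forall_retract_mono hH fun A ρ hA => ?_
  obtain ⟨P, p, hp⟩ := hC A
  obtain ⟨τ, rfl, _⟩ := hp.exists_retractArrow_isIso hq ρ hA
  have : IsIso τ.r.left := isIso_right_of_isIso_doubleFunctor_map hi h (retractArrowKernel τ).r
  have hri : τ.r.left ≫ τ.i.left = 𝟙 Q := by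
    simp [← cancel_mono τ.r.left]
  have hρ : τ.r.right ≫ τ.i.right = 𝟙 H := by
    rw [← cancel_epi q]
    calc
      q ≫ τ.r.right ≫ τ.i.right = τ.r.left ≫ p ≫ τ.i.right := (τ.r_w_assoc _).symm
      _ = (τ.r.left ≫ τ.i.left) ≫ q := by rw [Category.assoc, τ.i_w]
      _ = q ≫ 𝟙 H := by simp [hri]
  exact mono_of_mono_fac hρ

end Presentations

section IndecomposableComplexes

variable {X : ChainComplex C ℕ}

theorem nonempty_iso_doubleBoundaries (hX : Indecomposable X) (hcof : ∀ n, Projective (X.X n))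
    (hpd : ∀ n, ProjDimLE1 (X.homology n)) {n : ℕ} (hZ : ¬ IsZero (X.cycles n)) :
    Nonempty (X ≅ (doubleChainFunctor n).obj (Arrow.mk (kernel.ι (X.homologyπ n)))) := by
  have := isSplitMono_iCycles X hcof hpd n
  have := projective_cycles X hcof hpd n
  have : Projective (kernel (X.homologyπ n)) := (hpd n).projective_kernel _
  have := isIso_retract_r_of_indecomposable hX (retractDoubleBoundaries X n) fun h =>
    hZ (isZero_right_of_isZero_doubleFunctor_obj _ _ h)
  exact ⟨asIso (retractDoubleBoundaries X n).r⟩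

theorem not_isZero_cycles_of_not_isZero_homology {n : ℕ} (hn : ¬ IsZero (X.homology n)) :
    ¬ IsZero (X.cycles n) :=
  fun h => hn (.of_epi (X.homologyπ n) h)

theorem isZero_of_forall_isZero_cycles (h : ∀ n, IsZero (X.cycles n)) : IsZero X := by
  refine isZero_of_forall_isZero_X fun n => ?_
  have hd : X.d n ((ComplexShape.down ℕ).next n) = 0 := by
    rw [← X.toCycles_i, (h _).eq_of_tgt (X.toCycles _ _) 0, zero_comp]
  have := X.isIso_iCycles n _ rfl hd
  exact (h n).of_iso (asIso (X.iCycles n)).symm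

theorem exists_iso_disk_of_indecomposable (hX : Indecomposable X) (hcof : ∀ n, Projective (X.X n))
    (hpd : ∀ n, ProjDimLE1 (X.homology n)) (hH : ∀ n, IsZero (X.homology n)) :
    ∃ (n : ℕ) (Y : C), Indecomposable Y ∧ Projective Y ∧ Nonempty (X ≅ disk n Y) := by
  obtain ⟨n, hn⟩ : ∃ n, ¬ IsZero (X.cycles n) := by
    by_contra! h
    exact hX.1 (isZero_of_forall_isZero_cycles h)
  obtain ⟨e⟩ := nonempty_iso_doubleBoundaries hX hcof hpd hn
  have : IsIso (kernel.ι (X.homologyπ n)) := by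
    rw [(hH n).eq_of_tgt (X.homologyπ n) 0]
    infer_instance
  let e' : X ≅ (doubleChainFunctor n).obj (Arrow.mk (𝟙 (X.cycles n))) :=
    e ≪≫ (doubleChainFunctor n).mapIso
      (Arrow.isoMk (asIso (kernel.ι (X.homologyπ n))) (Iso.refl _))
  exact ⟨n + 1, X.cycles n, indecomposable_of_doubleFunctor_id (indecomposable_of_iso e' hX),
    projective_cycles X hcof hpd n, ⟨e' ≪≫ (diskIso n _).symm⟩⟩

theorem exists_iso_suspN_of_indecomposable (hC : HasMinimalCovers C) (hX : Indecomposable X)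
    (hcof : ∀ n, Projective (X.X n)) (hpd : ∀ n, ProjDimLE1 (X.homology n)) {n : ℕ}
    (hn : ¬ IsZero (X.homology n)) :
    Indecomposable (X.homology n) ∧ ∃ (P1 P0 : C) (dP : P1 ⟶ P0) (p : P0 ⟶ X.homology n),
      IsMinimalLen1Resolution dP p ∧ Nonempty (X ≅ suspN n (twoComplex dP)) := by
  obtain ⟨e⟩ := nonempty_iso_doubleBoundaries hX hcof hpd
    (not_isZero_cycles_of_not_isZero_homology hn)
  have hq := indecomposable_of_iso e hX
  have := projective_cycles X hcof hpd n
  refine ⟨hC.indecomposable_of_doubleFunctor_kernel hq hn, ?_⟩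
  obtain ⟨P, p, hp⟩ := hC (X.homology n)
  obtain ⟨_, _, -⟩ := id hp
  obtain ⟨e'⟩ := hp.nonempty_doubleFunctor_kernel_iso hq hn
  exact ⟨kernel p, P, kernel.ι p, p,
    hp.isMinimalLen1Resolution_kernel_ι ((hpd n).projective_kernel p),
    ⟨e ≪≫ e' ≪≫ (suspNTwoComplexIso _ n).symm⟩⟩

theorem isZero_X_of_not_isZero_homology (hX : Indecomposable X) (hcof : ∀ n, Projective (X.X n))
    (hpd : ∀ n, ProjDimLE1 (X.homology n)) {n : ℕ} (hn : ¬ IsZero (X.homology n)) {j : ℕ}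
    (h₀ : j ≠ n) (h₁ : j ≠ n + 1) : IsZero (X.X j) := by
  obtain ⟨e⟩ := nonempty_iso_doubleBoundaries hX hcof hpd
    (not_isZero_cycles_of_not_isZero_homology hn)
  exact (isZero_doubleFunctor_obj_X (c := .down ℕ) rfl n.succ_ne_self _ h₁ h₀).of_iso
    ((HomologicalComplex.eval C _ j).mapIso e)

theorem isZero_homology_of_ne (hX : Indecomposable X) (hcof : ∀ n, Projective (X.X n))
    (hpd : ∀ n, ProjDimLE1 (X.homology n)) {m n : ℕ} (hn : ¬ IsZero (X.homology n))
    (hmn : m ≠ n) : IsZero (X.homology m) := by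
  by_contra hm
  obtain hmn' | hnm' : m ≠ n + 1 ∨ n ≠ m + 1 := by lia
  · exact hm (HomologicalComplex.ExactAt.of_isZero
      (isZero_X_of_not_isZero_homology hX hcof hpd hn hmn hmn')).isZero_homology
  · exact hn (HomologicalComplex.ExactAt.of_isZero
      (isZero_X_of_not_isZero_homology hX hcof hpd hm hmn.symm hnm')).isZero_homology

end IndecomposableComplexes

section Converse

theorem indecomposable_disk (n : ℕ) {Y : C} (hY : Indecomposable Y) :
    Indecomposable (disk n Y) := by
  refine indecomposable_of_map (HomologicalComplex.eval C _ n)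
    (indecomposable_of_iso (diskXIso n Y).symm hY) fun A ρ (hA : IsZero (A.X n)) =>
    isZero_of_forall_isZero_X fun j => ?_
  obtain rfl | hj := eq_or_ne j n
  · exact hA
  obtain rfl | hj' := eq_or_ne (j + 1) n
  · refine .of_epi_eq_zero (ρ.r.f j) ?_
    rw [← cancel_epi ((disk (j + 1) Y).d (j + 1) j), ← ρ.r.comm, hA.eq_of_src (A.d _ _) 0,
      comp_zero, comp_zero]
  · exact .of_mono (ρ.i.f j) (isZero_disk_X Y hj hj')

theorem epi_d_of_isZero_homology {K : ChainComplex C ℕ} {n : ℕ} (hn : IsZero (K.homology n))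
    (hK : ∀ j < n, IsZero (K.X j)) : Epi (K.d (n + 1) n) := by
  have hex := (K.exactAt_iff' (n + 1) n _ (by simp) rfl).1 ((K.exactAt_iff_isZero_homology n).2 hn)
  refine hex.epi_f ?_
  cases n with
  | zero => exact K.shape _ _ (by simp)
  | succ n => exact (hK _ (by simp)).eq_of_tgt _ _

theorem isZero_X_of_retract_of_isMinimalProjectiveCover {X K : ChainComplex C ℕ} {n : ℕ}
    {P₁ P₀ A : C} {d : P₁ ⟶ P₀} {p : P₀ ⟶ A} (hp : IsMinimalProjectiveCover p) (hdp : d ≫ p = 0)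
    (e : Arrow.mk (X.d (n + 1) n) ≅ Arrow.mk d) (ρ : Retract K X) [Epi (K.d (n + 1) n)] :
    IsZero (K.X n) := by
  refine hp.isZero_of_retract ((ρ.map (HomologicalComplex.eval C _ n)).trans
    (.ofIso (Arrow.rightFunc.mapIso e))) ?_
  rw [← cancel_epi (K.d (n + 1) n)]
  have he : X.d (n + 1) n ≫ e.hom.right = e.hom.left ≫ d := (Arrow.w e.hom).symm
  calc
    K.d (n + 1) n ≫ (ρ.i.f n ≫ e.hom.right) ≫ p
        = ρ.i.f (n + 1) ≫ (X.d (n + 1) n ≫ e.hom.right) ≫ p := by simp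
    _ = K.d (n + 1) n ≫ 0 := by rw [he, Category.assoc, hdp, comp_zero, comp_zero, comp_zero]

theorem indecomposable_of_isMinimalLen1Resolution {X : ChainComplex C ℕ} {n : ℕ} {P₁ P₀ A : C}
    {d : P₁ ⟶ P₀} {p : P₀ ⟶ A} (hdp : IsMinimalLen1Resolution d p)
    (hX : ∀ j, j ≠ n → j ≠ n + 1 → IsZero (X.X j)) (e : Arrow.mk (X.d (n + 1) n) ≅ Arrow.mk d)
    (hn : Indecomposable (X.homology n)) : Indecomposable X := by
  refine indecomposable_of_map (HomologicalComplex.homologyFunctor C _ n) hn fun K ρ hK => ?_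
  obtain ⟨_, w, hp, -⟩ := hdp
  have hK' : ∀ j, j ≠ n → j ≠ n + 1 → IsZero (K.X j) := fun j h₀ h₁ =>
    .of_mono (ρ.i.f j) (hX j h₀ h₁)
  have := epi_d_of_isZero_homology hK fun j hj => hK' j (by lia) (by lia)
  have hKn : IsZero (K.X n) :=
    isZero_X_of_retract_of_isMinimalProjectiveCover hp w e ρ
  have : Mono (X.d (n + 1) n) :=
    ((MorphismProperty.monomorphisms C).arrow_mk_iso_iff e).2 (.infer_property d)
  have : Mono (K.d (n + 1) n) := mono_of_mono_fac (ρ.i.comm (n + 1) n).symm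
  refine isZero_of_forall_isZero_X fun j => ?_
  obtain rfl | h₀ := eq_or_ne j n
  · exact hKn
  obtain rfl | h₁ := eq_or_ne j (n + 1)
  · exact .of_mono (K.d (n + 1) n) hKn
  · exact hK' j h₀ h₁

end Converse

/-- **Statement 6.**  Let `C` be an abelian category satisfying the minimal cover axiom,
and `X` a non-negative chain complex with `X n` projective and `H_n(X)` of projective
dimension at most 1 for every `n`.  Then `X` is indecomposable if, and only if, either
(i) all homology of `X` vanishes, in which case `X ≅ Dⁿ(Y)` for some `n` and some
indecomposable projective `Y`; or (ii) the homology of `X` is nonzero in exactly one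
degree `n`, in which case `H_n(X)` is indecomposable and `X ≅ Sⁿ(P)` for `P` the minimal
projective resolution of `H_n(X)`. -/
theorem indecomposable_cofibrant_characterization
    (hC : HasMinimalCovers C)
    (X : ChainComplex C ℕ) (hcof : ∀ n : ℕ, Projective (X.X n))
    (hpd : ∀ n : ℕ, ProjDimLE1 (X.homology n)) :
    Indecomposable X ↔
      ((∀ n : ℕ, IsZero (X.homology n)) ∧
        ∃ (n : ℕ) (Y : C), Indecomposable Y ∧ Projective Y ∧
          Nonempty (X ≅ disk n Y)) ∨
      (∃ n : ℕ, ¬ IsZero (X.homology n) ∧ (∀ m : ℕ, m ≠ n → IsZero (X.homology m)) ∧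
        Indecomposable (X.homology n) ∧
        ∃ (P1 P0 : C) (dP : P1 ⟶ P0) (p : P0 ⟶ X.homology n),
          IsMinimalLen1Resolution dP p ∧
          Nonempty (X ≅ suspN n (twoComplex dP))) := by
  constructor
  · intro hX
    by_cases hH : ∀ n, IsZero (X.homology n)
    · exact .inl ⟨hH, exists_iso_disk_of_indecomposable hX hcof hpd hH⟩
    · obtain ⟨n, hn⟩ := not_forall.1 hH
      exact .inr ⟨n, hn, fun m hmn => isZero_homology_of_ne hX hcof hpd hn hmn,
        exists_iso_suspN_of_indecomposable hC hX hcof hpd hn⟩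
  · rintro (⟨-, n, Y, hY, -, ⟨e⟩⟩ | ⟨n, -, -, hH, P₁, P₀, d, p, hdp, ⟨e⟩⟩)
    · exact indecomposable_of_iso e.symm (indecomposable_disk n hY)
    · exact indecomposable_of_iso e.symm
        (indecomposable_of_isMinimalLen1Resolution hdp (isZero_suspN_twoComplex_X d n)
          (suspNTwoComplexArrowIso d n)
          (indecomposable_of_iso ((HomologicalComplex.homologyFunctor C _ n).mapIso e) hH))
end

section
/- Let C be an abelian category with enough projectives and let D be a finite poset of dimension at most 1. If every object of C has projective dimension at most n, then every functor X : D → C has projective dimension at most n + 1 in the functor category Fun(D, C); that is, the projective dimension of Fun(D, C) is at most the projective dimension of C plus 1. -/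
open CategoryTheory CategoryTheory.Limits

universe v u

/-- A poset has dimension at most 1 if whenever `w ≤ u ≤ x` and `w ≤ v ≤ x`, the elements
`u` and `v` are comparable. -/
def PosetDimLE1 (P : Type*) [Preorder P] : Prop :=
  ∀ ⦃w u v x : P⦄, w ≤ u → u ≤ x → w ≤ v → v ≤ x → u ≤ v ∨ v ≤ u

/-- An object has projective dimension at most `n` if it admits a projective resolution of
length at most `n`, i.e. one which vanishes in all degrees `k > n`. -/
def ProjDimLE {E : Type*} [Category E] [HasZeroObject E] [HasZeroMorphisms E]
    (n : ℕ) (A : E) : Prop :=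
  ∃ R : ProjectiveResolution A, ∀ k : ℕ, n < k → IsZero (R.complex.X k)

/-!
A functor `X : D ⥤ C` on a lower-finite poset is the quotient of the functor freely generated by
its values `X d`, placed at `d`, by one relation for every cover `d ⋖ d'`, since naturality can be
tested on covers. If intervals of `D` are chains, this presentation is also injective: evaluated at
`e`, it is split by sending the generator at `d ≤ e` to the sum of the relations met by the unique
saturated chain from `d` to `e`. Free functors on projective objects are projective, so a pointwise
projective functor has projective dimension at most `1`. In general, the kernel of an epimorphism
onto `X` from a free functor on projective objects has smaller pointwise projective dimension.
-/

section ProjectiveDimension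

variable {E : Type*} [Category* E]

section HasZeroMorphisms

variable [HasZeroMorphisms E]

theorem ProjDimLE.of_projective [HasZeroObject E] (A : E) [Projective A] : ProjDimLE 0 A :=
  ⟨ProjectiveResolution.self A, fun _ hk => HomologicalComplex.isZero_single_obj_X _ _ _ _ hk.ne'⟩

theorem exact_comp_mono {A B K P : E} {f : A ⟶ B} {g : B ⟶ K} {w : f ≫ g = 0}
    (h : (ShortComplex.mk f g w).Exact) (i : K ⟶ P) [Mono i] (w' : f ≫ g ≫ i = 0) :
    (ShortComplex.mk f (g ≫ i) w').Exact := by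
  let φ : ShortComplex.mk f g w ⟶ ShortComplex.mk f (g ≫ i) w' :=
    { τ₁ := 𝟙 A, τ₂ := 𝟙 B, τ₃ := i }
  have : Epi φ.τ₁ := inferInstanceAs (Epi (𝟙 A))
  have : IsIso φ.τ₂ := inferInstanceAs (IsIso (𝟙 B))
  have : Mono φ.τ₃ := inferInstanceAs (Mono i)
  exact (ShortComplex.exact_iff_of_epi_of_isIso_of_mono φ).1 h

theorem exact_epi_comp {Q K P X : E} {i : K ⟶ P} {p : P ⟶ X} {w : i ≫ p = 0}
    (h : (ShortComplex.mk i p w).Exact) (q : Q ⟶ K) [Epi q] (w' : (q ≫ i) ≫ p = 0) :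
    (ShortComplex.mk (q ≫ i) p w').Exact := by
  let φ : ShortComplex.mk (q ≫ i) p w' ⟶ ShortComplex.mk i p w :=
    { τ₁ := q, τ₂ := 𝟙 P, τ₃ := 𝟙 X }
  have : Epi φ.τ₁ := inferInstanceAs (Epi q)
  have : IsIso φ.τ₂ := inferInstanceAs (IsIso (𝟙 P))
  have : Mono φ.τ₃ := inferInstanceAs (Mono (𝟙 X))
  exact (ShortComplex.exact_iff_of_epi_of_isIso_of_mono φ).2 h

theorem augment_exactAt_succ (Q : ChainComplex E ℕ) {P : E} (f : Q.X 0 ⟶ P) (w : Q.d 1 0 ≫ f = 0)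
    (hf : (ShortComplex.mk _ _ w).Exact) (hQ : ∀ n, Q.ExactAt (n + 1)) (n : ℕ) :
    (Q.augment f w).ExactAt (n + 1) := by
  rw [HomologicalComplex.exactAt_iff' _ (n + 2) (n + 1) n (by simp) (by simp)]
  cases n with
  | zero => exact hf
  | succ n =>
    exact (HomologicalComplex.exactAt_iff' _ (n + 2) (n + 1) n (by simp) (by simp)).1 (hQ n)

end HasZeroMorphisms

variable [Abelian E]

theorem ProjDimLE.hasProjectiveDimensionLE {n : ℕ} {A : E} (hA : ProjDimLE n A) :
    HasProjectiveDimensionLE A n := by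
  obtain ⟨R, hR⟩ := hA
  let := HasExt.standard E
  rw [HasProjectiveDimensionLE, hasProjectiveDimensionLT_iff]
  intro i hi Y e
  obtain ⟨f, -, rfl⟩ := R.extMk_surjective e (i + 1) rfl
  obtain rfl : f = 0 := (hR i hi).eq_of_src _ _
  simp only [ProjectiveResolution.extMk_zero]

/-- The projective resolution given by an exact augmented chain complex
`⋯ ⟶ Q₁ ⟶ Q₀ ⟶ X ⟶ 0` of projective objects `Qₙ`. -/
noncomputable def resolutionOfExact (Q : ChainComplex E ℕ) (hP : ∀ n, Projective (Q.X n)) {X : E}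
    (p : Q.X 0 ⟶ X) (hpEpi : Epi p) (w : Q.d 1 0 ≫ p = 0) (hp : (ShortComplex.mk _ _ w).Exact)
    (hQ : ∀ n, Q.ExactAt (n + 1)) : ProjectiveResolution X where
  complex := Q
  projective := hP
  π := (ChainComplex.toSingle₀Equiv _ _).symm ⟨p, w⟩
  quasiIso := ⟨fun n => by
    cases n with
    | zero =>
      rw [ChainComplex.quasiIsoAt₀_iff, ShortComplex.quasiIso_iff_of_zeros']
      · refine (ShortComplex.exact_and_epi_g_iff_of_iso ?_).2 ⟨hp, hpEpi⟩
        exact ShortComplex.isoMk (Iso.refl _) (Iso.refl _) (Iso.refl _)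
          ((Category.id_comp _).trans (Category.comp_id _).symm)
          ((Category.id_comp _).trans
            ((ChainComplex.toSingle₀Equiv_symm_apply_f_zero p w).symm.trans
              (Category.comp_id _).symm))
      · exact Q.shape 0 0 (by simp)
      all_goals rfl
    | succ n =>
      rw [quasiIsoAt_iff_exactAt' _ _ (ChainComplex.exactAt_succ_single_obj _ n)]
      exact hQ n⟩

theorem ProjDimLE.of_shortExact {S : ShortComplex E} (hS : S.ShortExact) [Projective S.X₂] {n : ℕ}
    (h : ProjDimLE n S.X₁) : ProjDimLE (n + 1) S.X₃ := by
  obtain ⟨R, hR⟩ := h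
  have : Mono S.f := hS.mono_f
  let q : R.complex.X 0 ⟶ S.X₁ := R.π.f 0
  have : Epi q := inferInstanceAs (Epi (R.π.f 0))
  have hq : R.complex.d 1 0 ≫ q = 0 := R.complex_d_comp_π_f_zero
  have hqf : R.complex.d 1 0 ≫ q ≫ S.f = 0 := by rw [← Category.assoc, hq, zero_comp]
  have hfg : (q ≫ S.f) ≫ S.g = 0 := by rw [Category.assoc, S.zero, comp_zero]
  have hqExact : (ShortComplex.mk _ _ hq).Exact :=
    ShortComplex.exact_of_g_is_cokernel _ R.isColimitCokernelCofork
  refine ⟨resolutionOfExact (R.complex.augment (q ≫ S.f) hqf) ?_ S.g hS.epi_g hfg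
    (exact_epi_comp hS.exact q hfg)
    (augment_exactAt_succ _ _ _ (exact_comp_mono hqExact S.f hqf) R.complex_exactAt_succ), ?_⟩
  · rintro (_ | k)
    · exact ‹Projective S.X₂›
    · exact R.projective k
  · rintro (_ | k) hk
    · exact absurd hk (Nat.not_lt_zero _)
    · exact hR k (Nat.lt_of_succ_lt_succ hk)

end ProjectiveDimension

section FreeFunctor

variable {C : Type*} [Category* C] {D : Type*} [Preorder D] {J : Type*} (f : J → D) (Y : J → C)
  [∀ e, HasCoproductsOfShape {j // f j ≤ e} C]

/-- The functor freely generated by the objects `Y j`, each placed at the element `f j` of `D`.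
It is the left Kan extension of `Y` along `f`, where `J` is regarded as a discrete category. -/
noncomputable def freeFunctor : D ⥤ C where
  obj e := ∐ fun j : {j // f j ≤ e} => Y j
  map {_ e'} h := Sigma.desc fun j =>
    Sigma.ι (fun j : {j // f j ≤ e'} => Y j) ⟨j, j.2.trans (leOfHom h)⟩

namespace freeFunctor

variable {f}

/-- The inclusion of the generator `Y j` into the value of the free functor at `e`. -/
noncomputable def ι (j : J) {e : D} (h : f j ≤ e) : Y j ⟶ (freeFunctor f Y).obj e :=
  Sigma.ι (fun j : {j // f j ≤ e} => Y j) ⟨j, h⟩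

variable {Y}

theorem ι_map (j : J) {e e' : D} (h : f j ≤ e) (g : e ⟶ e') :
    ι Y j h ≫ (freeFunctor f Y).map g = ι Y j (h.trans (leOfHom g)) :=
  Sigma.ι_desc _ _

/-- The morphism out of a value of the free functor determined by its restrictions to the
generators. -/
noncomputable def objDesc {e : D} {B : C} (φ : ∀ j, f j ≤ e → (Y j ⟶ B)) :
    (freeFunctor f Y).obj e ⟶ B :=
  Sigma.desc fun j => φ j j.2

theorem ι_objDesc {e : D} {B : C} (φ : ∀ j, f j ≤ e → (Y j ⟶ B)) (j : J) (h : f j ≤ e) :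
    ι Y j h ≫ objDesc φ = φ j h :=
  Sigma.ι_desc _ _

theorem obj_hom_ext {e : D} {B : C} {φ ψ : (freeFunctor f Y).obj e ⟶ B}
    (h : ∀ j (hj : f j ≤ e), ι Y j hj ≫ φ = ι Y j hj ≫ ψ) : φ = ψ :=
  Sigma.hom_ext _ _ fun j => h j j.2

/-- The natural transformation out of the free functor determined by its values on the
generators. -/
noncomputable def desc {Z : D ⥤ C} (φ : ∀ j, Y j ⟶ Z.obj (f j)) : freeFunctor f Y ⟶ Z where
  app _ := objDesc fun j h => φ j ≫ Z.map (homOfLE h)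
  naturality _ _ g := obj_hom_ext fun j h => by
    rw [← Category.assoc, ι_map, ι_objDesc, ← Category.assoc, ι_objDesc, Category.assoc,
      ← Z.map_comp]
    rfl

theorem ι_desc_app {Z : D ⥤ C} (φ : ∀ j, Y j ⟶ Z.obj (f j)) (j : J) {e : D} (h : f j ≤ e) :
    ι Y j h ≫ (desc φ).app e = φ j ≫ Z.map (homOfLE h) :=
  ι_objDesc (fun j h => φ j ≫ Z.map (homOfLE h)) j h

theorem ι_desc_app_self {Z : D ⥤ C} (φ : ∀ j, Y j ⟶ Z.obj (f j)) (j : J) :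
    ι Y j le_rfl ≫ (desc φ).app (f j) = φ j := by
  rw [ι_desc_app, Subsingleton.elim (homOfLE _) (𝟙 (f j)), Z.map_id, Category.comp_id]

theorem ι_app {Z : D ⥤ C} (φ : freeFunctor f Y ⟶ Z) (j : J) {e : D} (h : f j ≤ e) :
    ι Y j h ≫ φ.app e = ι Y j le_rfl ≫ φ.app (f j) ≫ Z.map (homOfLE h) := by
  rw [← φ.naturality, ← Category.assoc, ι_map]

theorem hom_ext {Z : D ⥤ C} {φ ψ : freeFunctor f Y ⟶ Z}
    (h : ∀ j, ι Y j le_rfl ≫ φ.app (f j) = ι Y j le_rfl ≫ ψ.app (f j)) : φ = ψ := by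
  ext e
  refine obj_hom_ext fun j hj => ?_
  rw [ι_app, ← Category.assoc, h j, Category.assoc, ← ι_app]

instance projective_obj [∀ j, Projective (Y j)] (e : D) : Projective ((freeFunctor f Y).obj e) where
  factors φ p _ := ⟨objDesc fun j h => Projective.factorThru (ι Y j h ≫ φ) p,
    obj_hom_ext fun j h => by rw [← Category.assoc, ι_objDesc, Projective.factorThru_comp]⟩

instance projective [HasPushouts C] [∀ j, Projective (Y j)] : Projective (freeFunctor f Y) where
  factors φ p _ := ⟨desc fun j => Projective.factorThru (ι Y j le_rfl ≫ φ.app (f j)) (p.app (f j)),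
    hom_ext fun j => by
      rw [NatTrans.comp_app, ← Category.assoc, ι_desc_app_self, Projective.factorThru_comp]⟩

end freeFunctor

end FreeFunctor

section StandardResolution

variable {D : Type*} [PartialOrder D]

variable (D) in
/-- The edges of the Hasse diagram of `D`. -/
abbrev HasseEdge : Type _ := {p : D × D // p.1 ⋖ p.2}

instance HasseEdge.finite_le [LocallyFiniteOrderBot D] (e : D) :
    Finite {p : HasseEdge D // p.1.2 ≤ e} :=
  Finite.of_injective
    (fun p => ((⟨p.1.1.1, p.1.2.le.trans p.2⟩, ⟨p.1.1.2, p.2⟩) : {d // d ≤ e} × {d // d ≤ e}))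
    fun _ _ h => Subtype.ext <| Subtype.ext <|
      Prod.ext (congrArg (fun x => x.1.1) h) (congrArg (fun x => x.2.1) h)

theorem naturality_of_covBy [LocallyFiniteOrder D] {C : Type*} [Category* C] {X Z : D ⥤ C}
    (φ : ∀ d, X.obj d ⟶ Z.obj d)
    (hφ : ∀ ⦃d d'⦄ (h : d ⋖ d'), X.map (homOfLE h.le) ≫ φ d' = φ d ≫ Z.map (homOfLE h.le))
    {d e : D} (g : d ⟶ e) : X.map g ≫ φ e = φ d ≫ Z.map g := by
  induction le_iff_reflTransGen_covBy.1 (leOfHom g) with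
  | refl =>
    obtain rfl : g = 𝟙 d := Subsingleton.elim _ _
    rw [X.map_id, Z.map_id, Category.id_comp, Category.comp_id]
  | @tail b c hdb hbc ih =>
    have hdb' : d ≤ b := le_iff_reflTransGen_covBy.2 hdb
    obtain rfl : g = homOfLE hdb' ≫ homOfLE hbc.le := Subsingleton.elim _ _
    rw [X.map_comp, Z.map_comp, Category.assoc, hφ hbc, ← Category.assoc, ih,
      Category.assoc]

namespace PosetDimLE1

theorem covBy_unique (hdim : PosetDimLE1 D) {d u v e : D} (hu : d ⋖ u) (hv : d ⋖ v) (hue : u ≤ e)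
    (hve : v ≤ e) : u = v := by
  rcases hdim hu.le hue hv.le hve with h | h
  · exact (hv.eq_or_eq hu.le h).resolve_left hu.ne'
  · exact ((hu.eq_or_eq hv.le h).resolve_left hv.ne').symm

theorem le_fst_iff (hdim : PosetDimLE1 D) {p q : HasseEdge D} (hqp : q ≠ p) {e : D}
    (hp : p.1.2 ≤ e) (hq : q.1.2 ≤ e) : p.1.1 ≤ q.1.1 ↔ p.1.2 ≤ q.1.1 := by
  refine ⟨fun h => ?_, p.2.le.trans⟩
  rcases hdim p.2.le hp h (q.2.le.trans hq) with h' | h'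
  · exact h'
  · rcases p.2.eq_or_eq h h' with hfst | hfst
    · have hsnd : q.1.2 = p.1.2 := hdim.covBy_unique (hfst ▸ q.2) p.2 hq hp
      exact absurd (Subtype.ext (Prod.ext hfst hsnd)) hqp
    · exact hfst.ge

end PosetDimLE1

namespace standardResolution

variable [LocallyFiniteOrderBot D] {C : Type*} [Category* C] [Abelian C] (X : D ⥤ C)

/-- The functor freely generated by the values of `X`: the degree `0` term of the standard
resolution of `X`. -/
noncomputable abbrev generators : D ⥤ C := freeFunctor (fun d : D => d) X.obj

/-- The functor freely generated by one copy of `X d`, placed at `d'`, for every cover `d ⋖ d'`: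
the degree `1` term of the standard resolution of `X`. -/
noncomputable abbrev relations : D ⥤ C :=
  freeFunctor (fun p : HasseEdge D => p.1.2) fun p => X.obj p.1.1

/-- The differential of the standard resolution, which expresses that a generator at `d` and its
image under `X d ⟶ X d'` agree at `d'`, for every cover `d ⋖ d'`. -/
noncomputable def differential : relations X ⟶ generators X :=
  freeFunctor.desc fun p => freeFunctor.ι X.obj p.1.1 p.2.le -
    X.map (homOfLE p.2.le) ≫ freeFunctor.ι X.obj p.1.2 le_rfl

/-- The augmentation of the standard resolution. -/
noncomputable def augmentation : generators X ⟶ X :=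
  freeFunctor.desc fun d => 𝟙 (X.obj d)

variable {X}

theorem ι_differential (p : HasseEdge D) {e : D} (h : p.1.2 ≤ e) :
    freeFunctor.ι (fun p : HasseEdge D => X.obj p.1.1) p h ≫ (differential X).app e =
      freeFunctor.ι X.obj p.1.1 (p.2.le.trans h) -
        X.map (homOfLE p.2.le) ≫ freeFunctor.ι X.obj p.1.2 h := by
  rw [differential, freeFunctor.ι_desc_app, Preadditive.sub_comp, Category.assoc,
    freeFunctor.ι_map, freeFunctor.ι_map]

theorem ι_augmentation (d : D) {e : D} (h : d ≤ e) :
    freeFunctor.ι X.obj d h ≫ (augmentation X).app e = X.map (homOfLE h) := by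
  rw [augmentation, freeFunctor.ι_desc_app, Category.id_comp]

theorem ι_augmentation_self (d : D) :
    freeFunctor.ι X.obj d le_rfl ≫ (augmentation X).app d = 𝟙 (X.obj d) :=
  freeFunctor.ι_desc_app_self _ d

theorem differential_comp_eq_zero_iff {Z : D ⥤ C} (φ : generators X ⟶ Z) :
    differential X ≫ φ = 0 ↔ ∀ ⦃d d' : D⦄ (h : d ⋖ d'),
      X.map (homOfLE h.le) ≫ freeFunctor.ι X.obj d' le_rfl ≫ φ.app d' =
        (freeFunctor.ι X.obj d le_rfl ≫ φ.app d) ≫ Z.map (homOfLE h.le) := by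
  have key (p : HasseEdge D) :
      freeFunctor.ι (fun p : HasseEdge D => X.obj p.1.1) p le_rfl ≫
          (differential X ≫ φ).app p.1.2 =
        (freeFunctor.ι X.obj p.1.1 le_rfl ≫ φ.app p.1.1) ≫ Z.map (homOfLE p.2.le) -
          X.map (homOfLE p.2.le) ≫ freeFunctor.ι X.obj p.1.2 le_rfl ≫ φ.app p.1.2 := by
    rw [NatTrans.comp_app, ← Category.assoc, ι_differential, Preadditive.sub_comp, Category.assoc,
      Category.assoc, freeFunctor.ι_app φ p.1.1]
  refine ⟨fun h d d' hd => ?_, fun h => freeFunctor.hom_ext fun p => ?_⟩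
  · have := key ⟨(d, d'), hd⟩
    rw [h, NatTrans.app_zero, comp_zero] at this
    exact (sub_eq_zero.1 this.symm).symm
  · rw [key p, h p.2, sub_self, NatTrans.app_zero, comp_zero]

theorem differential_augmentation : differential X ≫ augmentation X = 0 := by
  rw [differential_comp_eq_zero_iff]
  intro d d' h
  rw [ι_augmentation, ι_augmentation, ← X.map_comp, ← X.map_comp]
  rfl

variable (X) in
/-- The standard resolution of `X`, as a short complex
`⨁_{d ⋖ d'} X d ⊗ D(d', -) ⟶ ⨁_d X d ⊗ D(d, -) ⟶ X`. -/
noncomputable def shortComplex : ShortComplex (D ⥤ C) :=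
  ShortComplex.mk (differential X) (augmentation X) differential_augmentation

/-- The natural transformation out of `X` determined by one out of its generators which respects
the relations. -/
noncomputable def augmentationDesc {Z : D ⥤ C} (φ : generators X ⟶ Z)
    (hφ : differential X ≫ φ = 0) : X ⟶ Z where
  app d := freeFunctor.ι X.obj d le_rfl ≫ φ.app d
  naturality _ _ g := by
    let := LocallyFiniteOrder.ofFiniteIcc fun a b : D =>
      (Finset.Iic b).finite_toSet.subset fun x hx => Finset.mem_coe.2 (Finset.mem_Iic.2 hx.2)
    exact naturality_of_covBy _ ((differential_comp_eq_zero_iff φ).1 hφ) g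

variable (X) in
/-- Every functor is presented by its standard resolution. -/
noncomputable def isColimitAugmentation :
    IsColimit (CokernelCofork.ofπ (augmentation X) differential_augmentation) :=
  CokernelCofork.IsColimit.ofπ _ _ augmentationDesc
    (fun φ _ => freeFunctor.hom_ext fun d => by
      rw [NatTrans.comp_app, ← Category.assoc, ι_augmentation_self, Category.id_comp]
      rfl)
    (fun φ _ m hm => by
      ext d
      subst hm
      simp only [augmentationDesc, NatTrans.comp_app, ← Category.assoc, ι_augmentation_self,
        Category.id_comp])

open Classical in
variable (X) in
/-- The sum of the relations given by the covers between `d` and `e`, each precomposed with the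
map of `X` starting from `d`. -/
noncomputable def relationSum (d e : D) : X.obj d ⟶ (relations X).obj e :=
  let := Fintype.ofFinite {p : HasseEdge D // p.1.2 ≤ e}
  ∑ p : {p : HasseEdge D // p.1.2 ≤ e}, if h : d ≤ p.1.1.1 then
    X.map (homOfLE h) ≫ freeFunctor.ι (fun p : HasseEdge D => X.obj p.1.1) p.1 p.2 else 0

theorem relationSum_sub (hdim : PosetDimLE1 D) (p : HasseEdge D) {e : D} (hp : p.1.2 ≤ e) :
    relationSum X p.1.1 e - X.map (homOfLE p.2.le) ≫ relationSum X p.1.2 e =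
      freeFunctor.ι (fun p : HasseEdge D => X.obj p.1.1) p hp := by
  let := Fintype.ofFinite {p : HasseEdge D // p.1.2 ≤ e}
  simp only [relationSum, Preadditive.comp_sum, ← Finset.sum_sub_distrib]
  refine (Finset.sum_eq_single (⟨p, hp⟩ : {p : HasseEdge D // p.1.2 ≤ e}) ?_ ?_).trans ?_
  · rintro ⟨q, hq⟩ - hqp
    have hle := hdim.le_fst_iff (fun h => hqp (Subtype.ext h)) hp hq
    by_cases h : p.1.2 ≤ q.1.1
    · rw [dif_pos h, dif_pos (hle.2 h), ← Category.assoc, ← X.map_comp, homOfLE_comp, sub_self]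
    · rw [dif_neg h, dif_neg (mt hle.1 h), comp_zero, sub_zero]
  · exact fun h => absurd (Finset.mem_univ _) h
  · rw [dif_pos le_rfl, dif_neg p.2.lt.not_ge, comp_zero, sub_zero]
    exact (congrArg (· ≫ _) (X.map_id _)).trans (Category.id_comp _)

theorem mono_differential (hdim : PosetDimLE1 D) : Mono (differential X) := by
  have hsplit (e : D) : (differential X).app e ≫
      freeFunctor.objDesc (fun d _ => relationSum X d e) = 𝟙 ((relations X).obj e) :=
    freeFunctor.obj_hom_ext fun p hp => by
      rw [← Category.assoc, ι_differential, Preadditive.sub_comp, Category.assoc,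
        freeFunctor.ι_objDesc, freeFunctor.ι_objDesc, relationSum_sub hdim p hp, Category.comp_id]
  have (e : D) : Mono ((differential X).app e) := mono_of_mono_fac (hsplit e)
  exact NatTrans.mono_of_mono_app _

theorem shortExact (hdim : PosetDimLE1 D) : (shortComplex X).ShortExact where
  exact := ShortComplex.exact_of_g_is_cokernel _ (isColimitAugmentation X)
  mono_f := mono_differential hdim
  epi_g := Cofork.IsColimit.epi (isColimitAugmentation X)

end standardResolution

end StandardResolution

section ProjectiveDimensionOfFunctors

variable {C : Type*} [Category* C] [Abelian C] {D : Type*} [PartialOrder D]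
  [LocallyFiniteOrderBot D]

theorem projDimLE_one_of_projective_obj (hdim : PosetDimLE1 D) (X : D ⥤ C)
    [∀ d, Projective (X.obj d)] : ProjDimLE 1 X := by
  have : Projective (standardResolution.shortComplex X).X₂ :=
    inferInstanceAs (Projective (standardResolution.generators X))
  exact ProjDimLE.of_shortExact (S := standardResolution.shortComplex X)
    (standardResolution.shortExact hdim) (ProjDimLE.of_projective (standardResolution.relations X))

theorem exists_projective_shortExact [EnoughProjectives C] (X : D ⥤ C) :
    ∃ S : ShortComplex (D ⥤ C), S.ShortExact ∧ S.X₃ = X ∧ Projective S.X₂ ∧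
      ∀ d, Projective (S.X₂.obj d) := by
  let P : D ⥤ C := freeFunctor (fun d : D => d) fun d => Projective.over (X.obj d)
  let p : P ⟶ X := freeFunctor.desc fun d => Projective.π (X.obj d)
  have hP (d : D) : Projective (P.obj d) := freeFunctor.projective_obj d
  have (d : D) : Epi (p.app d) := epi_of_epi_fac (freeFunctor.ι_desc_app_self _ d)
  have : Epi p := NatTrans.epi_of_epi_app p
  exact ⟨ShortComplex.mk _ _ (kernel.condition p), { exact := ShortComplex.exact_kernel p }, rfl,
    inferInstanceAs (Projective P), hP⟩

theorem projDimLE_succ_of_obj [EnoughProjectives C] (hdim : PosetDimLE1 D) {n : ℕ} {X : D ⥤ C}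
    (hX : ∀ d, HasProjectiveDimensionLE (X.obj d) n) : ProjDimLE (n + 1) X := by
  induction n generalizing X with
  | zero =>
    have (d : D) : Projective (X.obj d) := (projective_iff_hasProjectiveDimensionLE_zero _).2 (hX d)
    exact projDimLE_one_of_projective_obj hdim X
  | succ n ih =>
    obtain ⟨S, hS, rfl, _, hP⟩ := exists_projective_shortExact X
    have hS_obj (d : D) : (S.map ((evaluation D C).obj d)).ShortExact :=
      hS.map_of_exact ((evaluation D C).obj d)
    exact .of_shortExact hS <| ih fun d =>
      ((hS_obj d).hasProjectiveDimensionLT_X₃_iff n (hP d)).1 (hX d)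

end ProjectiveDimensionOfFunctors

theorem projDim_functor_category_le_general {C : Type*} [Category* C] [Abelian C]
    [EnoughProjectives C] {D : Type*} [PartialOrder D] [LocallyFiniteOrderBot D]
    (hdim : PosetDimLE1 D) (n : ℕ) {X : D ⥤ C} (hX : ∀ d, ProjDimLE n (X.obj d)) :
    ProjDimLE (n + 1) X :=
  projDimLE_succ_of_obj hdim fun d => (hX d).hasProjectiveDimensionLE

/-- **Statement 14.** Let `C` be an abelian category with enough projectives and `D` a finite
poset of dimension at most 1.  If every object of `C` has projective dimension at most `n`,
then every functor `X : D ⥤ C` has projective dimension at most `n + 1` in the functor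
category `Fun(D, C)`. -/
theorem projDim_functor_category_le
    (C : Type u) [Category.{v} C] [Abelian C] [EnoughProjectives C]
    (D : Type) [PartialOrder D] [Fintype D] (hdim : PosetDimLE1 D)
    (n : ℕ) (hC : ∀ A : C, ProjDimLE n A) :
    ∀ X : D ⥤ C, ProjDimLE (n + 1) X := by
  classical
  let := LocallyFiniteOrderBot.ofIic D (fun d => {x | x ≤ d}) (by simp)
  exact fun X => projDim_functor_category_le_general hdim n fun d => hC (X.obj d)
end
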